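/- Let d ≥ 1 and let φ ∈ Φ_d have a strictly positive nonincreasing d-radial spectral density f_d. Let A₁, A₂ be symmetric positive definite real d×d matrices such that the minimum eigenvalue of A₁ is at least the maximum eigenvalue of A₂, and let b₁, b₂ ≥ 0. Then the function h ↦ b₁ φ(√(hᵀA₁h)) − b₂ φ(√(hᵀA₂h)) is a stationary covariance function on ℝ^d if and only if b₁ ≥ b₂ (∏_{j=1}^d λ_j(A₁)/λ_j(A₂))^{1/2}, where λ₁(A_i),…,λ_d(A_i) denote the eigenvalues of A_i. -/

import Mathlib

open MeasureTheory
open scoped BigOperators RealInnerProductSpace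

noncomputable section

/-- A function `C : ℝ^d → ℝ` is a stationary covariance function if it is
positive semidefinite. -/
def IsStationaryCovariance (d : ℕ) (C : EuclideanSpace ℝ (Fin d) → ℝ) : Prop :=
  ∀ (n : ℕ) (x : Fin n → EuclideanSpace ℝ (Fin d)) (v : Fin n → ℝ),
    0 ≤ ∑ i, ∑ j, v i * v j * C (x i - x j)

/-- `φ : [0,∞) → ℝ` belongs to the class `Φ_d`. -/
def MemPhi (d : ℕ) (φ : ℝ → ℝ) : Prop :=
  ContinuousOn φ (Set.Ici 0) ∧ IsStationaryCovariance d (fun h => φ ‖h‖)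

/-- `f` is a `d`-radial spectral density of `φ`. -/
def IsRadialSpectralDensity (d : ℕ) (φ f : ℝ → ℝ) : Prop :=
  (∀ u : ℝ, 0 ≤ u → 0 ≤ f u) ∧
  MeasureTheory.Integrable (fun ω : EuclideanSpace ℝ (Fin d) => f ‖ω‖) ∧
  ∀ h : EuclideanSpace ℝ (Fin d),
    (φ ‖h‖ : ℂ) = ∫ ω : EuclideanSpace ℝ (Fin d),
      Complex.exp (Complex.I * ((⟪h, ω⟫ : ℝ) : ℂ)) * ((f ‖ω‖ : ℝ) : ℂ)

/-- The quadratic form `hᵀ A h`. -/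
def quadForm {d : ℕ} (A : Matrix (Fin d) (Fin d) ℝ) (h : EuclideanSpace ℝ (Fin d)) : ℝ :=
  ∑ i, ∑ j, h i * A i j * h j

/-! If `φ(‖·‖)` has spectral density `f(‖·‖)`, then for a linear bijection `T` the function
`h ↦ φ(‖T h‖)` has spectral density `ω ↦ |det T|⁻¹ f(‖S ω‖)`, with `S` the inverse adjoint of `T`.
Writing `hᵀAᵢh = ‖Tᵢ h‖²`, the function under study has density
`g ω = c₁ f(‖S₁ ω‖) - c₂ f(‖S₂ ω‖)` with `cᵢ = bᵢ |det Tᵢ|⁻¹`, and the claimed condition reads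
`c₂ ≤ c₁`. The assumption on the eigenvalues gives `‖T₂ h‖ ≤ ‖T₁ h‖`, and by duality
`‖S₁ ω‖ ≤ ‖S₂ ω‖`; as `f` is nonincreasing, `c₂ ≤ c₁` makes `g` nonnegative, which is sufficient.

Conversely, averaging the positive semidefiniteness inequality over independent Gaussian points
shows that the integral of `g` against every centred Gaussian density is nonnegative. As this
Gaussian density concentrates at the origin, the average of `g` tends to `(c₁ - c₂) f(0+)`. -/

open Filter Topology ProbabilityTheory
open LinearMap (det adjoint)

section PositiveSemidefinite

/-- Positive semidefinite real functions on an additive group. On `ℝ^d` this is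
`IsStationaryCovariance`; the general notion allows coordinate-free arguments. -/
def IsPosSemidefFun {G : Type*} [Sub G] (C : G → ℝ) : Prop :=
  ∀ (n : ℕ) (x : Fin n → G) (v : Fin n → ℝ), 0 ≤ ∑ i, ∑ j, v i * v j * C (x i - x j)

lemma measurePreserving_eval_prodMk {ι : Type*} [Fintype ι] {X : ι → Type*}
    [∀ i, MeasurableSpace (X i)] (μ : ∀ i, Measure (X i)) [∀ i, IsProbabilityMeasure (μ i)]
    {i j : ι} (hij : i ≠ j) :
    MeasurePreserving (fun x : ∀ i, X i => (x i, x j)) (Measure.pi μ) ((μ i).prod (μ j)) := by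
  refine ⟨by fun_prop, ?_⟩
  have hindep : IndepFun (fun x : ∀ i, X i => x i) (fun x => x j) (Measure.pi μ) :=
    (iIndepFun_pi (μ := μ) (X := fun _ => id) fun _ => aemeasurable_id).indepFun hij
  rw [(indepFun_iff_map_prod_eq_prod_map_map (measurable_pi_apply i).aemeasurable
      (measurable_pi_apply j).aemeasurable).1 hindep,
    (measurePreserving_eval μ i).map_eq, (measurePreserving_eval μ j).map_eq]

variable {G : Type*} [AddGroup G] [MeasurableSpace G] {C : G → ℝ}

-- Average the defining inequality over `n + 1` independent points with law `μ` and unit weights.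
lemma IsPosSemidefFun.apply_zero_add_mul_integral_nonneg (hC : IsPosSemidefFun C)
    (μ : Measure G) [IsProbabilityMeasure μ]
    (hint : Integrable (fun p : G × G => C (p.1 - p.2)) (μ.prod μ)) (n : ℕ) :
    0 ≤ C 0 + n * ∫ p : G × G, C (p.1 - p.2) ∂(μ.prod μ) := by
  set J := ∫ p : G × G, C (p.1 - p.2) ∂(μ.prod μ) with hJ
  let P := Measure.pi fun _ : Fin (n + 1) => μ
  have hint' (i j : Fin (n + 1)) : Integrable (fun x => C (x i - x j)) P := by
    rcases eq_or_ne i j with rfl | hij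
    · simp
    · exact (measurePreserving_eval_prodMk (fun _ => μ) hij).integrable_comp_of_integrable hint
  have hpair (i j : Fin (n + 1)) :
      ∫ x, C (x i - x j) ∂P = J + if i = j then C 0 - J else 0 := by
    rcases eq_or_ne i j with rfl | hij
    · simp [P]
    · have hmp := measurePreserving_eval_prodMk (fun _ : Fin (n + 1) => μ) hij
      rw [if_neg hij, add_zero, hJ, ← hmp.map_eq,
        integral_map hmp.aemeasurable (hmp.map_eq ▸ hint.aestronglyMeasurable)]
  have hsum : ∫ x, ∑ i, ∑ j, C (x i - x j) ∂P = (n + 1) * (C 0 + n * J) := by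
    rw [integral_finsetSum _ fun i _ => integrable_finsetSum _ fun j _ => hint' i j]
    simp_rw [integral_finsetSum _ fun j _ => hint' _ j, hpair]
    simp only [Finset.sum_add_distrib, Finset.sum_const, Finset.card_univ, Fintype.card_fin,
      nsmul_eq_mul, Nat.cast_add, Nat.cast_one, Finset.sum_ite_eq, Finset.mem_univ, ↓reduceIte]
    ring
  have hnonneg : 0 ≤ ∫ x, ∑ i, ∑ j, C (x i - x j) ∂P :=
    integral_nonneg fun x => by simpa using hC (n + 1) x 1
  exact nonneg_of_mul_nonneg_right (hsum ▸ hnonneg) (by positivity)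

lemma IsPosSemidefFun.integral_sub_nonneg (hC : IsPosSemidefFun C) (μ : Measure G)
    [IsProbabilityMeasure μ] (hint : Integrable (fun p : G × G => C (p.1 - p.2)) (μ.prod μ)) :
    0 ≤ ∫ p : G × G, C (p.1 - p.2) ∂(μ.prod μ) := by
  by_contra! hneg
  obtain ⟨n, hn⟩ := exists_nat_gt (C 0 / -∫ p : G × G, C (p.1 - p.2) ∂(μ.prod μ))
  rw [div_lt_iff₀ (neg_pos.2 hneg)] at hn
  linarith [hC.apply_zero_add_mul_integral_nonneg μ hint n]

end PositiveSemidefinite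

section CosTransform

variable {V : Type*} [NormedAddCommGroup V] [InnerProductSpace ℝ V] [FiniteDimensional ℝ V]
  [MeasurableSpace V] [BorelSpace V] {g : V → ℝ}

/-- The cosine transform `h ↦ ∫ cos⟪h, ω⟫ g(ω) dω`: the Fourier transform of an even function,
in the normalization used for spectral densities. -/
def cosTransform (g : V → ℝ) (h : V) : ℝ :=
  ∫ ω, Real.cos ⟪h, ω⟫ * g ω

lemma integrable_cos_inner_mul (hg : Integrable g) (h : V) :
    Integrable fun ω => Real.cos ⟪h, ω⟫ * g ω :=
  hg.bdd_mul (by fun_prop) (.of_forall fun _ => Real.abs_cos_le_one _)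

lemma sum_sum_mul_cos_sub {ι : Type*} (s : Finset ι) (v θ : ι → ℝ) :
    ∑ i ∈ s, ∑ j ∈ s, v i * v j * Real.cos (θ i - θ j) =
      (∑ i ∈ s, v i * Real.cos (θ i)) ^ 2 + (∑ i ∈ s, v i * Real.sin (θ i)) ^ 2 := by
  simp_rw [sq, Finset.sum_mul_sum, ← Finset.sum_add_distrib, Real.cos_sub]
  refine Finset.sum_congr rfl fun i _ => Finset.sum_congr rfl fun j _ => ?_
  ring

theorem isPosSemidefFun_cosTransform (hg : Integrable g) (hg0 : ∀ ω, 0 ≤ g ω) :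
    IsPosSemidefFun (cosTransform g) := by
  intro n x v
  have hint (i j : Fin n) : Integrable fun ω => v i * v j * (Real.cos ⟪x i - x j, ω⟫ * g ω) :=
    (integrable_cos_inner_mul hg _).const_mul _
  calc 0 ≤ ∫ ω, (∑ i, ∑ j, v i * v j * Real.cos (⟪x i, ω⟫ - ⟪x j, ω⟫)) * g ω :=
        integral_nonneg fun ω => mul_nonneg (by rw [sum_sum_mul_cos_sub]; positivity) (hg0 ω)
    _ = ∫ ω, ∑ i, ∑ j, v i * v j * (Real.cos ⟪x i - x j, ω⟫ * g ω) := by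
        simp_rw [Finset.sum_mul, inner_sub_left, mul_assoc]
    _ = ∑ i, ∑ j, v i * v j * cosTransform g (x i - x j) := by
        rw [integral_finsetSum _ fun i _ => integrable_finsetSum _ fun j _ => hint i j]
        simp_rw [integral_finsetSum _ fun j _ => hint _ j, integral_const_mul, cosTransform]

lemma integral_cos_inner_sub (μ : Measure V) [IsFiniteMeasure μ] (ω : V) :
    ∫ p : V × V, Real.cos ⟪p.1 - p.2, ω⟫ ∂(μ.prod μ) = ‖charFun μ ω‖ ^ 2 := by
  have hint : Integrable (fun p : V × V => Complex.exp (⟪p.1 - p.2, ω⟫ * Complex.I))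
      (μ.prod μ) :=
    .of_bound (by fun_prop) 1 (.of_forall fun p => (Complex.norm_exp_ofReal_mul_I _).le)
  have hexp : ∫ p : V × V, Complex.exp (⟪p.1 - p.2, ω⟫ * Complex.I) ∂(μ.prod μ)
      = (‖charFun μ ω‖ ^ 2 : ℝ) := by
    rw [Complex.ofReal_pow, ← Complex.mul_conj', ← charFun_neg, charFun_apply, charFun_apply,
      ← integral_prod_mul]
    simp_rw [← Complex.exp_add, ← add_mul, inner_sub_left, inner_neg_right, ← Complex.ofReal_add,
      sub_eq_add_neg]
  calc ∫ p : V × V, Real.cos ⟪p.1 - p.2, ω⟫ ∂(μ.prod μ)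
      = ∫ p : V × V, (Complex.exp (⟪p.1 - p.2, ω⟫ * Complex.I)).re ∂(μ.prod μ) := by
        simp_rw [Complex.exp_ofReal_mul_I_re]
    _ = ‖charFun μ ω‖ ^ 2 := by
        rw [← Complex.ofReal_re (‖charFun μ ω‖ ^ 2), ← hexp]
        exact integral_re hint

theorem IsPosSemidefFun.integral_charFun_sq_mul_nonneg (hpsd : IsPosSemidefFun (cosTransform g))
    (hg : Integrable g) (μ : Measure V) [IsProbabilityMeasure μ] :
    0 ≤ ∫ ω, ‖charFun μ ω‖ ^ 2 * g ω := by
  have hint : Integrable (fun q : (V × V) × V => Real.cos ⟪q.1.1 - q.1.2, q.2⟫ * g q.2)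
      ((μ.prod μ).prod volume) :=
    (hg.comp_snd (μ.prod μ)).bdd_mul (by fun_prop) (.of_forall fun _ => Real.abs_cos_le_one _)
  calc 0 ≤ ∫ p : V × V, cosTransform g (p.1 - p.2) ∂(μ.prod μ) :=
        hpsd.integral_sub_nonneg μ hint.integral_prod_left
    _ = ∫ ω, (∫ p : V × V, Real.cos ⟪p.1 - p.2, ω⟫ * g ω ∂(μ.prod μ)) :=
        integral_integral_swap hint
    _ = ∫ ω, ‖charFun μ ω‖ ^ 2 * g ω := by
        simp_rw [integral_mul_const, integral_cos_inner_sub]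

lemma norm_charFun_stdGaussian_sq (ω : V) :
    ‖charFun (stdGaussian V) ω‖ ^ 2 = Real.exp (-1 * ‖ω‖ ^ 2) := by
  have hre : (-(‖ω‖ : ℂ) ^ 2 / 2).re = -‖ω‖ ^ 2 / 2 := by
    rw [← Complex.ofReal_re (-‖ω‖ ^ 2 / 2)]
    push_cast
    rfl
  rw [charFun_stdGaussian, Complex.norm_exp, hre, ← Real.exp_nat_mul]
  congr 1
  push_cast
  ring

-- Test against the centred Gaussian law of covariance `t⁻² • 1`, then rescale `ω` by `t`.
lemma IsPosSemidefFun.integral_gaussian_mul_comp_smul_nonneg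
    (hpsd : IsPosSemidefFun (cosTransform g)) (hg : Integrable g) {t : ℝ} (ht : 0 < t) :
    0 ≤ ∫ ω, Real.exp (-1 * ‖ω‖ ^ 2) * g (t • ω) := by
  have := Measure.isProbabilityMeasure_map (μ := stdGaussian V)
    (f := fun x => t⁻¹ • x) (by fun_prop)
  have hnonneg := hpsd.integral_charFun_sq_mul_nonneg hg ((stdGaussian V).map fun x => t⁻¹ • x)
  simp_rw [charFun_map_smul, norm_charFun_stdGaussian_sq] at hnonneg
  have hscale := Measure.integral_comp_smul (volume : Measure V)
    (fun ω => Real.exp (-1 * ‖t⁻¹ • ω‖ ^ 2) * g ω) t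
  simp_rw [inv_smul_smul₀ ht.ne'] at hscale
  exact hscale ▸ smul_nonneg (abs_nonneg _) hnonneg

lemma integrable_exp_neg_mul_sq_norm {b : ℝ} (hb : 0 < b) :
    Integrable fun ω : V => Real.exp (-b * ‖ω‖ ^ 2) := by
  refine .of_integral_ne_zero ?_
  rw [GaussianFourier.integral_rexp_neg_mul_sq_norm hb]
  positivity

theorem IsPosSemidefFun.nonneg_of_tendsto_comp_smul (hpsd : IsPosSemidefFun (cosTransform g))
    (hg : Integrable g) {B ℓ : ℝ} (hB : ∀ ω, |g ω| ≤ B)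
    (hlim : ∀ᵐ ω : V, Tendsto (fun t : ℝ => g (t • ω)) (𝓝[>] 0) (𝓝 ℓ)) : 0 ≤ ℓ := by
  have hgauss := integrable_exp_neg_mul_sq_norm (V := V) one_pos
  have htend : Tendsto (fun t : ℝ => ∫ ω, Real.exp (-1 * ‖ω‖ ^ 2) * g (t • ω)) (𝓝[>] 0)
      (𝓝 (∫ ω : V, Real.exp (-1 * ‖ω‖ ^ 2) * ℓ)) := by
    refine tendsto_integral_filter_of_dominated_convergence
      (fun ω => Real.exp (-1 * ‖ω‖ ^ 2) * B) ?_ ?_ (hgauss.mul_const B) ?_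
    · filter_upwards [self_mem_nhdsWithin] with t (ht : 0 < t)
      exact hgauss.1.mul (hg.comp_smul ht.ne').1
    · refine .of_forall fun t => .of_forall fun ω => ?_
      rw [norm_mul, Real.norm_of_nonneg (Real.exp_pos _).le]
      exact mul_le_mul_of_nonneg_left (hB _) (Real.exp_pos _).le
    · filter_upwards [hlim] with ω hω using hω.const_mul _
  have hnonneg : 0 ≤ ∫ ω : V, Real.exp (-1 * ‖ω‖ ^ 2) * ℓ := by
    refine ge_of_tendsto htend ?_
    filter_upwards [self_mem_nhdsWithin] with t (ht : 0 < t)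
    exact hpsd.integral_gaussian_mul_comp_smul_nonneg hg ht
  rw [integral_mul_const, GaussianFourier.integral_rexp_neg_mul_sq_norm one_pos] at hnonneg
  exact nonneg_of_mul_nonneg_right hnonneg (by positivity)

end CosTransform

section LinearChange

lemma det_adjoint {𝕜 E : Type*} [RCLike 𝕜] [NormedAddCommGroup E] [InnerProductSpace 𝕜 E]
    [FiniteDimensional 𝕜 E] (L : E →ₗ[𝕜] E) : det (adjoint L) = star (det L) := by
  let e := stdOrthonormalBasis 𝕜 E
  rw [← LinearMap.det_toMatrix e.toBasis, LinearMap.toMatrix_adjoint e e,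
    Matrix.det_conjTranspose, LinearMap.det_toMatrix]

variable {V : Type*} [NormedAddCommGroup V] [InnerProductSpace ℝ V] [FiniteDimensional ℝ V]

/-- The contragredient (inverse adjoint) of `T`: the substitution on frequencies dual to the
substitution `T` on space variables. -/
def contragredient (T : V ≃ₗ[ℝ] V) : V →ₗ[ℝ] V :=
  adjoint (T.symm : V →ₗ[ℝ] V)

lemma inner_apply_contragredient (T : V ≃ₗ[ℝ] V) (h ω : V) :
    ⟪T h, contragredient T ω⟫ = ⟪h, ω⟫ := by
  simp [contragredient, LinearMap.adjoint_inner_right]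

lemma contragredient_injective (T : V ≃ₗ[ℝ] V) : Function.Injective (contragredient T) := by
  refine (injective_iff_map_eq_zero _).2 fun ω hω => ?_
  rw [← inner_self_eq_zero (𝕜 := ℝ), ← inner_apply_contragredient T, hω, inner_zero_right]

lemma det_contragredient (T : V ≃ₗ[ℝ] V) :
    det (contragredient T) = (det (T : V →ₗ[ℝ] V))⁻¹ := by
  rw [contragredient, det_adjoint, star_trivial, LinearEquiv.det_coe_symm]

lemma norm_contragredient_le_of_norm_le {T₁ T₂ : V ≃ₗ[ℝ] V} (hT : ∀ h, ‖T₂ h‖ ≤ ‖T₁ h‖) (ω : V) :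
    ‖contragredient T₁ ω‖ ≤ ‖contragredient T₂ ω‖ := by
  set u := contragredient T₁ ω with hu
  rcases eq_or_ne u 0 with h0 | h0
  · simp [h0]
  refine le_of_mul_le_mul_left ?_ (norm_pos_iff.2 h0)
  calc ‖u‖ * ‖u‖ = ⟪T₁ (T₁.symm u), contragredient T₁ ω⟫ := by
        rw [T₁.apply_symm_apply, ← hu, real_inner_self_eq_norm_mul_norm]
    _ = ⟪T₂ (T₁.symm u), contragredient T₂ ω⟫ := by
        rw [inner_apply_contragredient, inner_apply_contragredient]
    _ ≤ ‖T₂ (T₁.symm u)‖ * ‖contragredient T₂ ω‖ := real_inner_le_norm _ _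
    _ ≤ ‖u‖ * ‖contragredient T₂ ω‖ := by
        gcongr
        simpa using hT (T₁.symm u)

variable [MeasurableSpace V] [BorelSpace V] {g : V → ℝ}

lemma map_contragredient_volume (T : V ≃ₗ[ℝ] V) :
    (volume : Measure V).map (contragredient T) =
      ENNReal.ofReal |det (T : V →ₗ[ℝ] V)| • volume := by
  have hdet : det (contragredient T) ≠ 0 := by
    rw [det_contragredient]
    exact inv_ne_zero (LinearEquiv.isUnit_det' T).ne_zero
  rw [Measure.map_linearMap_addHaar_eq_smul_addHaar _ hdet, det_contragredient, inv_inv]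

lemma measurableEmbedding_contragredient (T : V ≃ₗ[ℝ] V) :
    MeasurableEmbedding (contragredient T) :=
  (contragredient T).continuous_of_finiteDimensional.measurableEmbedding
    (contragredient_injective T)

lemma integrable_comp_contragredient (hg : Integrable g) (T : V ≃ₗ[ℝ] V) :
    Integrable fun ω => g (contragredient T ω) := by
  rw [← Function.comp_def, ← (measurableEmbedding_contragredient T).integrable_map_iff,
    map_contragredient_volume]
  exact hg.smul_measure ENNReal.ofReal_ne_top

lemma cosTransform_comp_contragredient (g : V → ℝ) (T : V ≃ₗ[ℝ] V) (h : V) :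
    cosTransform (fun ω => g (contragredient T ω)) h =
      |det (T : V →ₗ[ℝ] V)| * cosTransform g (T h) := by
  calc cosTransform (fun ω => g (contragredient T ω)) h
      = ∫ ω, Real.cos ⟪T h, contragredient T ω⟫ * g (contragredient T ω) := by
        simp_rw [inner_apply_contragredient, cosTransform]
    _ = ∫ ω, Real.cos ⟪T h, ω⟫ * g ω ∂(volume.map (contragredient T)) :=
        ((measurableEmbedding_contragredient T).integral_map
          fun ω => Real.cos ⟪T h, ω⟫ * g ω).symm
    _ = |det (T : V →ₗ[ℝ] V)| * cosTransform g (T h) := by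
        rw [map_contragredient_volume, integral_smul_measure,
          ENNReal.toReal_ofReal (abs_nonneg _), smul_eq_mul, cosTransform]

lemma mul_cosTransform_sub_mul_cosTransform (hg : Integrable g) (T₁ T₂ : V ≃ₗ[ℝ] V) (b₁ b₂ : ℝ)
    (h : V) :
    b₁ * cosTransform g (T₁ h) - b₂ * cosTransform g (T₂ h) =
      cosTransform (fun ω => b₁ / |det (T₁ : V →ₗ[ℝ] V)| * g (contragredient T₁ ω) -
        b₂ / |det (T₂ : V →ₗ[ℝ] V)| * g (contragredient T₂ ω)) h := by
  have hdet (T : V ≃ₗ[ℝ] V) : |det (T : V →ₗ[ℝ] V)| ≠ 0 :=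
    abs_ne_zero.2 (LinearEquiv.isUnit_det' T).ne_zero
  have hterm (T : V ≃ₗ[ℝ] V) (b : ℝ) :
      ∫ ω, Real.cos ⟪h, ω⟫ * (b / |det (T : V →ₗ[ℝ] V)| * g (contragredient T ω)) =
        b * cosTransform g (T h) := by
    simp_rw [mul_left_comm (Real.cos _)]
    rw [integral_const_mul, ← cosTransform, cosTransform_comp_contragredient, ← mul_assoc,
      div_mul_cancel₀ _ (hdet T)]
  have hint (T : V ≃ₗ[ℝ] V) (b : ℝ) :=
    integrable_cos_inner_mul ((integrable_comp_contragredient hg T).const_mul b) h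
  simp_rw [cosTransform, mul_sub]
  rw [integral_sub (hint T₁ _) (hint T₂ _), hterm, hterm, cosTransform, cosTransform]

end LinearChange

section Radial

lemma exists_pos_tendsto_nhdsGT_zero {f : ℝ → ℝ} (hmono : AntitoneOn f (Set.Ici 0)) {u : ℝ}
    (hu : 0 < u) (hfu : 0 < f u) : ∃ c, 0 < c ∧ Tendsto f (𝓝[>] 0) (𝓝 c) := by
  have hbdd : BddAbove (f '' Set.Ioi 0) := by
    refine ⟨f 0, ?_⟩
    rintro _ ⟨v, hv : 0 < v, rfl⟩
    exact hmono Set.self_mem_Ici hv.le hv.le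
  exact ⟨sSup (f '' Set.Ioi 0), hfu.trans_le (le_csSup hbdd ⟨u, hu, rfl⟩),
    (hmono.mono Set.Ioi_subset_Ici_self).tendsto_nhdsGT hbdd⟩

variable {V : Type*} [NormedAddCommGroup V] [InnerProductSpace ℝ V]

lemma tendsto_comp_norm_apply_smul {f : ℝ → ℝ} {c : ℝ} (hf : Tendsto f (𝓝[>] 0) (𝓝 c))
    {L : V →ₗ[ℝ] V} (hL : Function.Injective L) {ω : V} (hω : ω ≠ 0) :
    Tendsto (fun t : ℝ => f ‖L (t • ω)‖) (𝓝[>] 0) (𝓝 c) := by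
  have hpos : 0 < ‖L ω‖ := norm_pos_iff.2 ((map_ne_zero_iff L hL).2 hω)
  refine hf.comp (tendsto_nhdsWithin_iff.2 ⟨?_, ?_⟩)
  · have hcont : Continuous fun t : ℝ => ‖L (t • ω)‖ := by
      simp_rw [map_smul]
      fun_prop
    simpa using (hcont.tendsto 0).mono_left nhdsWithin_le_nhds
  · filter_upwards [self_mem_nhdsWithin] with t (ht : 0 < t)
    rw [map_smul, norm_smul, Real.norm_of_nonneg ht.le]
    exact mul_pos ht hpos

variable [FiniteDimensional ℝ V] [MeasurableSpace V] [BorelSpace V]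

theorem isPosSemidefFun_cosTransform_sub_iff [Nontrivial V] {f : ℝ → ℝ}
    (hf0 : ∀ v, 0 ≤ v → 0 ≤ f v) (hmono : AntitoneOn f (Set.Ici 0)) {u : ℝ} (hu : 0 < u)
    (hfu : 0 < f u) {S₁ S₂ : V →ₗ[ℝ] V} (hS₁ : Function.Injective S₁)
    (hS₂ : Function.Injective S₂) (hS : ∀ ω, ‖S₁ ω‖ ≤ ‖S₂ ω‖)
    (hint₁ : Integrable fun ω => f ‖S₁ ω‖) (hint₂ : Integrable fun ω => f ‖S₂ ω‖)
    {c₁ c₂ : ℝ} (hc₂ : 0 ≤ c₂) :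
    IsPosSemidefFun (cosTransform fun ω => c₁ * f ‖S₁ ω‖ - c₂ * f ‖S₂ ω‖) ↔ c₂ ≤ c₁ := by
  have hint : Integrable fun ω => c₁ * f ‖S₁ ω‖ - c₂ * f ‖S₂ ω‖ :=
    (hint₁.const_mul c₁).sub (hint₂.const_mul c₂)
  constructor
  · intro hpsd
    obtain ⟨c, hc, hlim⟩ := exists_pos_tendsto_nhdsGT_zero hmono hu hfu
    have habs (c : ℝ) (v : V) : |c * f ‖v‖| ≤ |c| * f 0 := by
      rw [abs_mul, abs_of_nonneg (hf0 _ (norm_nonneg v))]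
      gcongr
      exact hmono Set.self_mem_Ici (norm_nonneg v) (norm_nonneg v)
    have hbound (ω : V) : |c₁ * f ‖S₁ ω‖ - c₂ * f ‖S₂ ω‖| ≤ |c₁| * f 0 + |c₂| * f 0 :=
      (abs_sub _ _).trans (add_le_add (habs _ _) (habs _ _))
    have hnonneg : 0 ≤ c₁ * c - c₂ * c := by
      refine hpsd.nonneg_of_tendsto_comp_smul hint hbound ?_
      filter_upwards [Measure.ae_ne volume (0 : V)] with ω hω
      exact ((tendsto_comp_norm_apply_smul hlim hS₁ hω).const_mul c₁).sub
        ((tendsto_comp_norm_apply_smul hlim hS₂ hω).const_mul c₂)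
    exact le_of_mul_le_mul_right (sub_nonneg.1 hnonneg) hc
  · intro hc
    refine isPosSemidefFun_cosTransform hint fun ω => sub_nonneg.2 ?_
    exact mul_le_mul hc (hmono (norm_nonneg _) (norm_nonneg _) (hS ω)) (hf0 _ (norm_nonneg _))
      (hc₂.trans hc)

theorem isPosSemidefFun_mul_cosTransform_sub_iff [Nontrivial V] {f : ℝ → ℝ}
    (hf0 : ∀ v, 0 ≤ v → 0 ≤ f v) (hmono : AntitoneOn f (Set.Ici 0)) {u : ℝ} (hu : 0 < u)
    (hfu : 0 < f u) (hint : Integrable fun ω : V => f ‖ω‖) {T₁ T₂ : V ≃ₗ[ℝ] V}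
    (hT : ∀ h, ‖T₂ h‖ ≤ ‖T₁ h‖) {b₁ b₂ : ℝ} (hb₂ : 0 ≤ b₂) :
    IsPosSemidefFun (fun h => b₁ * cosTransform (fun ω => f ‖ω‖) (T₁ h) -
        b₂ * cosTransform (fun ω => f ‖ω‖) (T₂ h)) ↔
      b₂ * (|det (T₁ : V →ₗ[ℝ] V)| / |det (T₂ : V →ₗ[ℝ] V)|) ≤ b₁ := by
  have hdet₁ : 0 < |det (T₁ : V →ₗ[ℝ] V)| := abs_pos.2 (LinearEquiv.isUnit_det' T₁).ne_zero
  simp_rw [mul_cosTransform_sub_mul_cosTransform hint]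
  rw [isPosSemidefFun_cosTransform_sub_iff hf0 hmono hu hfu (contragredient_injective T₁)
    (contragredient_injective T₂) (norm_contragredient_le_of_norm_le hT)
    (integrable_comp_contragredient hint T₁) (integrable_comp_contragredient hint T₂)
    (div_nonneg hb₂ (abs_nonneg _)), le_div_iff₀ hdet₁, div_mul_eq_mul_div, mul_div_assoc]

end Radial

section QuadraticForm

open scoped MatrixOrder

variable {d : ℕ} {A A₁ A₂ : Matrix (Fin d) (Fin d) ℝ}

lemma quadForm_eq_dotProduct_mulVec (A : Matrix (Fin d) (Fin d) ℝ)
    (h : EuclideanSpace ℝ (Fin d)) : quadForm A h = h.ofLp ⬝ᵥ A.mulVec h.ofLp := by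
  simp [quadForm, dotProduct, Matrix.mulVec, Finset.mul_sum, mul_assoc]

lemma quadForm_star_mul_self (B : Matrix (Fin d) (Fin d) ℝ) (h : EuclideanSpace ℝ (Fin d)) :
    quadForm (star B * B) h = ‖B.toEuclideanLin h‖ ^ 2 := by
  rw [quadForm_eq_dotProduct_mulVec, ← Matrix.mulVec_mulVec, Matrix.dotProduct_mulVec,
    Matrix.star_eq_conjTranspose, Matrix.conjTranspose_eq_transpose_of_trivial,
    Matrix.vecMul_transpose, EuclideanSpace.real_norm_sq_eq]
  simp [dotProduct, sq]

lemma quadForm_le_quadForm (hle : (A₁ - A₂).PosSemidef) (h : EuclideanSpace ℝ (Fin d)) :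
    quadForm A₂ h ≤ quadForm A₁ h := by
  have hnonneg := hle.dotProduct_mulVec_nonneg h.ofLp
  rw [star_trivial, Matrix.sub_mulVec, dotProduct_sub] at hnonneg
  simpa only [quadForm_eq_dotProduct_mulVec] using sub_nonneg.1 hnonneg

lemma exists_linearEquiv_sqrt_quadForm_eq_norm (hA : A.PosDef) :
    ∃ T : EuclideanSpace ℝ (Fin d) ≃ₗ[ℝ] EuclideanSpace ℝ (Fin d),
      (∀ h, √(quadForm A h) = ‖T h‖) ∧
        |det (T : EuclideanSpace ℝ (Fin d) →ₗ[ℝ] EuclideanSpace ℝ (Fin d))| = √A.det := by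
  obtain ⟨B, hB, rfl⟩ :=
    CStarAlgebra.isStrictlyPositive_iff_eq_star_mul_self.1 hA.isStrictlyPositive
  have hdet : det B.toEuclideanLin = B.det := LinearMap.det_toLpLin ..
  have hdet0 : det B.toEuclideanLin ≠ 0 := by
    rw [hdet]
    exact ((Matrix.isUnit_iff_isUnit_det B).1 hB).ne_zero
  refine ⟨LinearMap.equivOfDetNeZero _ hdet0, fun h => ?_, ?_⟩
  · rw [quadForm_star_mul_self, Real.sqrt_sq (norm_nonneg _)]
    rfl
  · have hcoe : (LinearMap.equivOfDetNeZero _ hdet0 :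
      EuclideanSpace ℝ (Fin d) →ₗ[ℝ] EuclideanSpace ℝ (Fin d)) = B.toEuclideanLin := rfl
    rw [hcoe, hdet, Matrix.det_mul, Matrix.star_eq_conjTranspose, Matrix.det_conjTranspose,
      star_trivial, Real.sqrt_mul_self_eq_abs]

end QuadraticForm

section Eigenvalues

open scoped MatrixOrder

variable {ι : Type*} [Fintype ι] [DecidableEq ι] {A₁ A₂ : Matrix ι ι ℝ}

lemma posSemidef_sub_of_forall_eigenvalues_le (hA₁ : A₁.IsHermitian) (hA₂ : A₂.IsHermitian)
    (heig : ∀ i j, hA₂.eigenvalues j ≤ hA₁.eigenvalues i) : (A₁ - A₂).PosSemidef := by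
  rw [← Matrix.le_iff]
  cases isEmpty_or_nonempty ι
  · exact (Subsingleton.elim _ _).le
  obtain ⟨i, hi⟩ := Finite.exists_min hA₁.eigenvalues
  calc A₂ ≤ algebraMap ℝ _ (hA₁.eigenvalues i) := by
        rw [le_algebraMap_iff_spectrum_le (ha := hA₂.isSelfAdjoint),
          hA₂.spectrum_real_eq_range_eigenvalues]
        rintro _ ⟨j, rfl⟩
        exact heig i j
    _ ≤ A₁ := by
        rw [algebraMap_le_iff_le_spectrum (ha := hA₁.isSelfAdjoint),
          hA₁.spectrum_real_eq_range_eigenvalues]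
        rintro _ ⟨j, rfl⟩
        exact hi j

lemma prod_eigenvalues_div_eigenvalues (hA₁ : A₁.IsHermitian) (hA₂ : A₂.IsHermitian) :
    ∏ j, hA₁.eigenvalues j / hA₂.eigenvalues j = A₁.det / A₂.det := by
  rw [Finset.prod_div_distrib, hA₁.det_eq_prod_eigenvalues, hA₂.det_eq_prod_eigenvalues]
  rfl

end Eigenvalues

lemma IsRadialSpectralDensity.eq_cosTransform {d : ℕ} {φ f : ℝ → ℝ}
    (hf : IsRadialSpectralDensity d φ f) (h : EuclideanSpace ℝ (Fin d)) :
    φ ‖h‖ = cosTransform (fun ω => f ‖ω‖) h := by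
  obtain ⟨-, hint, hφ⟩ := hf
  have hint' : Integrable fun ω : EuclideanSpace ℝ (Fin d) =>
      Complex.exp (Complex.I * (⟪h, ω⟫ : ℝ)) * (f ‖ω‖ : ℝ) :=
    (hint.ofReal (𝕜 := ℂ)).bdd_mul (by fun_prop)
      (.of_forall fun ω => (Complex.norm_exp_I_mul_ofReal _).le)
  calc φ ‖h‖ = (∫ ω : EuclideanSpace ℝ (Fin d),
        Complex.exp (Complex.I * (⟪h, ω⟫ : ℝ)) * (f ‖ω‖ : ℝ)).re := by
        rw [← hφ, Complex.ofReal_re]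
    _ = ∫ ω : EuclideanSpace ℝ (Fin d),
        (Complex.exp (Complex.I * (⟪h, ω⟫ : ℝ)) * (f ‖ω‖ : ℝ)).re := (integral_re hint').symm
    _ = cosTransform (fun ω => f ‖ω‖) h := by
        simp_rw [cosTransform, Complex.re_mul_ofReal, mul_comm Complex.I,
          Complex.exp_ofReal_mul_I_re]

theorem statement_2_general {d : ℕ} (hd : 1 ≤ d) {φ f : ℝ → ℝ}
    (hf : IsRadialSpectralDensity d φ f) (hfmono : AntitoneOn f (Set.Ici 0))
    {u : ℝ} (hu : 0 < u) (hfu : 0 < f u)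
    {A₁ A₂ : Matrix (Fin d) (Fin d) ℝ} (hA₁ : A₁.PosDef) (hA₂ : A₂.PosDef)
    (hle : (A₁ - A₂).PosSemidef) (b₁ : ℝ) {b₂ : ℝ} (hb₂ : 0 ≤ b₂) :
    IsStationaryCovariance d
      (fun h => b₁ * φ √(quadForm A₁ h) - b₂ * φ √(quadForm A₂ h)) ↔
    b₂ * √(A₁.det / A₂.det) ≤ b₁ := by
  have : NeZero d := ⟨Nat.one_le_iff_ne_zero.1 hd⟩
  obtain ⟨T₁, hT₁, hdet₁⟩ := exists_linearEquiv_sqrt_quadForm_eq_norm hA₁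
  obtain ⟨T₂, hT₂, hdet₂⟩ := exists_linearEquiv_sqrt_quadForm_eq_norm hA₂
  have hT (h : EuclideanSpace ℝ (Fin d)) : ‖T₂ h‖ ≤ ‖T₁ h‖ := by
    rw [← hT₁, ← hT₂]
    exact Real.sqrt_le_sqrt (quadForm_le_quadForm hle h)
  simp_rw [hT₁, hT₂, hf.eq_cosTransform]
  rw [Real.sqrt_div hA₁.det_pos.le, ← hdet₁, ← hdet₂]
  exact isPosSemidefFun_mul_cosTransform_sub_iff hf.1 hfmono hu hfu hf.2.1 hT hb₂

theorem statement_2 (d : ℕ) (hd : 1 ≤ d) (φ f : ℝ → ℝ)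
    (hφ : MemPhi d φ) (hf : IsRadialSpectralDensity d φ f)
    (hfpos : ∀ u : ℝ, 0 ≤ u → 0 < f u) (hfmono : AntitoneOn f (Set.Ici 0))
    (A₁ A₂ : Matrix (Fin d) (Fin d) ℝ) (hA₁ : A₁.PosDef) (hA₂ : A₂.PosDef)
    (heig : ∀ i j : Fin d, hA₂.1.eigenvalues j ≤ hA₁.1.eigenvalues i)
    (b₁ b₂ : ℝ) (hb₁ : 0 ≤ b₁) (hb₂ : 0 ≤ b₂) :
    IsStationaryCovariance d
      (fun h => b₁ * φ (Real.sqrt (quadForm A₁ h)) - b₂ * φ (Real.sqrt (quadForm A₂ h))) ↔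
    b₂ * Real.sqrt (∏ j : Fin d, hA₁.1.eigenvalues j / hA₂.1.eigenvalues j) ≤ b₁ := by
  rw [prod_eigenvalues_div_eigenvalues]
  exact statement_2_general hd hf hfmono one_pos (hfpos 1 zero_le_one) hA₁ hA₂
    (posSemidef_sub_of_forall_eigenvalues_le hA₁.1 hA₂.1 heig) b₁ hb₂
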